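/- Suppose |a_1⁻¹⋯a_n⁻¹ b_1⁻¹⋯b_n⁻¹| < |t| < 1 and that x_i b_j ∉ qᶻ for all 1 ≤ i, j ≤ n. Then I(t;x) = [(1 − t a_1⋯a_n b_1⋯b_n) / (a_1⋯a_n (1 − t))] · (x_1⋯x_n) · I(qt;x). (Recurrence in the exponent parameter, Lemma 3.2 of the paper, written multiplicatively with t = q^α.) -/

import Mathlib

/-!
The product of differences is a Vandermonde determinant, so up to the factor `(1-q)^n` the sum
`I(t;x)` is the determinant of the one-variable moments `S_k(x_i) = ∑_m t^m w(z) z^k`,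
`z = x_i q^m`, with `0 ≤ k < n`. Multiplying the weight `w` by `z` has the same effect as replacing
`t` by `qt` and multiplying by `x_i`, so `x_1 ⋯ x_n I(qt;x)` is likewise the determinant of the
moments with `1 ≤ k ≤ n`.

The weight satisfies the `q`-Pearson equation `w(qz) ∏ (1 - qz/a_j) = w(z) ∏ (1 - b_j z)`, so the
translation invariance of the lattice gives `∑_k c_k S_k(x_i) = 0` for every `i`, where the `c_k`
are the coefficients of `∏ (1 - z/a_j) - t ∏ (1 - b_j z)`. Thus `(c_0, …, c_n)` lies in the kernel
of the `n × (n+1)` matrix of moments, whose two extreme maximal minors are therefore in the ratio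
of `(-1)^n c_n` to `c_0`; and `c_0 = 1 - t`, `c_n = (-1)^n (1/(a_1 ⋯ a_n) - t b_1 ⋯ b_n)`.

The moments converge because consecutive terms of `S_k` have ratio tending to `t q^k` at one end of
the lattice and to `t q^(k-n) a_1 ⋯ a_n b_1 ⋯ b_n` at the other.
-/

open scoped BigOperators
open Finset

/-- The infinite q-Pochhammer symbol `(a)_∞ = ∏_{i=0}^∞ (1 - qⁱ a)`. -/
noncomputable def qp (q a : ℂ) : ℂ := ∏' i : ℕ, (1 - q ^ i * a)

/-- Summand of the normalized Jackson integral of Milne–Gustafson type. -/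
noncomputable def mgTerm {n : ℕ} (q t : ℂ) (a b x : Fin n → ℂ) (ν : Fin n → ℤ) : ℂ :=
  t ^ (∑ i, ν i) *
    (∏ i, ∏ j, qp q (q * (a j)⁻¹ * (x i * q ^ ν i)) / qp q (b j * (x i * q ^ ν i))) *
    ∏ i, ∏ j ∈ Finset.Ioi i, (x j * q ^ ν j - x i * q ^ ν i)

/-- The normalized Jackson integral of Milne–Gustafson type `I(t;x)`. -/
noncomputable def mgSum {n : ℕ} (q t : ℂ) (a b x : Fin n → ℂ) : ℂ :=
  (1 - q) ^ n * ∑' ν : Fin n → ℤ, mgTerm q t a b x ν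

open Filter Topology Bornology Polynomial

section MultipleSeries

variable {R : Type*} [NormedCommRing R] {n : ℕ}

theorem summable_norm_prod_pi {β : Fin n → Type*} {f : ∀ i, β i → R}
    (hf : ∀ i, Summable fun m => ‖f i m‖) :
    Summable fun ν : ∀ i, β i => ‖∏ i, f i (ν i)‖ := by
  induction n with
  | zero => exact (hasSum_unique _).summable
  | succ n ih =>
    rw [← (Fin.consEquiv β).summable_iff]
    simpa [Function.comp_def, Fin.consEquiv, Fin.prod_univ_succ] using
      (hf 0).mul_norm (ih fun i => hf i.succ)

theorem hasSum_prod_pi [CompleteSpace R] {β : Fin n → Type*} {f : ∀ i, β i → R}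
    (hf : ∀ i, Summable fun m => ‖f i m‖) :
    HasSum (fun ν : ∀ i, β i => ∏ i, f i (ν i)) (∏ i, ∑' m, f i m) := by
  refine (summable_norm_prod_pi hf).of_norm.hasSum_iff.2 ?_
  induction n with
  | zero => simp
  | succ n ih =>
    rw [← (Fin.consEquiv β).tsum_eq, Fin.prod_univ_succ, ← ih fun i => hf i.succ,
      tsum_mul_tsum_of_summable_norm (hf 0) (summable_norm_prod_pi fun i => hf i.succ)]
    simp [Fin.consEquiv, Fin.prod_univ_succ]

theorem hasSum_det_pi [CompleteSpace R] {β : Fin n → Type*} {f : ∀ i, Fin n → β i → R}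
    (hf : ∀ i j, Summable fun m => ‖f i j m‖) :
    HasSum (fun ν : ∀ i, β i => (Matrix.of fun i j => f i j (ν i)).det)
      (Matrix.of fun i j => ∑' m, f i j m).det := by
  simp only [← Matrix.det_transpose (Matrix.of _), Matrix.det_apply, Matrix.transpose_apply,
    Matrix.of_apply]
  exact hasSum_sum fun σ _ => (hasSum_prod_pi fun i => hf i (σ i)).const_smul _

end MultipleSeries

theorem mul_det_submatrix_succAbove_comm {R : Type*} [CommRing R] {n : ℕ}
    {S : Matrix (Fin n) (Fin (n + 1)) R} {c : Fin (n + 1) → R} (h : S.mulVec c = 0)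
    (k l : Fin (n + 1)) :
    (-1) ^ (l : ℕ) * (S.submatrix id l.succAbove).det * c k =
      (-1) ^ (k : ℕ) * (S.submatrix id k.succAbove).det * c l := by
  -- Bordering `S` by the unit row `e_l` gives a square matrix `T` with `T c = c_l e_0`, and the
  -- first column of its adjugate consists of the signed maximal minors of `S`.
  let T : Matrix (Fin (n + 1)) (Fin (n + 1)) R := Matrix.of (Fin.cons (Pi.single l 1) S)
  have hTc : T.mulVec c = Pi.single 0 (c l) := by
    ext i
    refine Fin.cases ?_ (fun i => ?_) i
    · exact single_one_dotProduct l c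
    · exact congr_fun h i
  have hadj (j : Fin (n + 1)) :
      T.adjugate j 0 = (-1) ^ (j : ℕ) * (S.submatrix id j.succAbove).det := by
    rw [Matrix.adjugate_fin_succ_eq_det_submatrix, Fin.val_zero, zero_add]
    rfl
  have hdet : T.det = T.adjugate l 0 := by
    rw [Matrix.adjugate_apply]
    exact congr_arg _ (Matrix.updateRow_eq_self T 0).symm
  have key : T.adjugate.mulVec (T.mulVec c) k = T.det * c k := by
    rw [Matrix.mulVec_mulVec, Matrix.adjugate_mul, Matrix.smul_mulVec, Matrix.one_mulVec]
    rfl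
  rw [hTc, Matrix.mulVec_single, hdet, hadj] at key
  simpa [hadj] using key.symm

theorem zpow_sum₀ {ι G₀ : Type*} [CommGroupWithZero G₀] {g : G₀} (hg : g ≠ 0) (s : Finset ι)
    (f : ι → ℤ) : g ^ ∑ i ∈ s, f i = ∏ i ∈ s, g ^ f i := by
  induction s using Finset.cons_induction with
  | empty => simp
  | cons i s hi ih => rw [Finset.sum_cons, Finset.prod_cons, zpow_add₀ hg, ih]

theorem summable_int_of_tendsto_ratio {𝕜 : Type*} [NormedField 𝕜] [CompleteSpace 𝕜]
    {u ρ : ℤ → 𝕜} {α β : 𝕜} (hu : ∀ᶠ m in cofinite, u (m + 1) = ρ m * u m)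
    (hα : Tendsto ρ atTop (𝓝 α)) (hα1 : ‖α‖ < 1)
    (hβ : Tendsto ρ atBot (𝓝 β)) (hβ1 : 1 < ‖β‖) : Summable u := by
  rw [Int.cofinite_eq, eventually_sup] at hu
  refine .of_nat_of_neg ?_ ?_
  · obtain ⟨r, hαr, hr1⟩ := exists_between hα1
    refine summable_of_ratio_norm_eventually_le hr1 ?_
    filter_upwards [tendsto_natCast_atTop_atTop.eventually hu.2,
      tendsto_natCast_atTop_atTop.eventually (hα.norm.eventually_lt_const hαr)] with m hm hρ
    rw [Nat.cast_succ, hm, norm_mul]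
    gcongr
  · obtain ⟨r, h1r, hrβ⟩ := exists_between hβ1
    have hneg : Tendsto (fun m : ℕ => -((m + 1 : ℕ) : ℤ)) atTop atBot :=
      tendsto_neg_atTop_atBot.comp
        (tendsto_natCast_atTop_atTop.comp (tendsto_add_atTop_nat 1))
    refine summable_of_ratio_norm_eventually_le (inv_lt_one_of_one_lt₀ h1r) ?_
    filter_upwards [hneg.eventually hu.1,
      hneg.eventually (hβ.norm.eventually_const_lt hrβ)] with m hm hρ
    rw [le_inv_mul_iff₀ (zero_lt_one.trans h1r)]
    calc r * ‖u (-((m + 1 : ℕ) : ℤ))‖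
        ≤ ‖ρ (-((m + 1 : ℕ) : ℤ))‖ * ‖u (-((m + 1 : ℕ) : ℤ))‖ := by gcongr
      _ = ‖u (-(m : ℤ))‖ := by
        rw [← norm_mul, ← hm]
        congr 2
        push_cast
        ring

theorem eventually_cofinite_one_sub_mul_ne_zero {𝕜 : Type*} [Field 𝕜] (c : 𝕜) :
    ∀ᶠ z in cofinite, 1 - c * z ≠ 0 :=
  (Set.finite_singleton c⁻¹).subset fun _ hz =>
    eq_inv_of_mul_eq_one_right (sub_eq_zero.1 (not_not.1 hz)).symm

theorem tendsto_one_sub_mul_div_one_sub_mul_cobounded {𝕜 : Type*} [NormedField 𝕜] (c : 𝕜)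
    {d : 𝕜} (hd : d ≠ 0) :
    Tendsto (fun z => (1 - c * z) / (1 - d * z)) (cobounded 𝕜) (𝓝 (c / d)) := by
  have hinv : Tendsto (fun z : 𝕜 => z⁻¹) (cobounded 𝕜) (𝓝 0) := tendsto_inv₀_cobounded
  have hlim : Tendsto (fun z => (z⁻¹ - c) / (z⁻¹ - d)) (cobounded 𝕜) (𝓝 ((0 - c) / (0 - d))) :=
    (hinv.sub_const c).div (hinv.sub_const d) (by simpa using hd)
  rw [zero_sub, zero_sub, neg_div_neg_eq] at hlim
  refine hlim.congr' ?_
  filter_upwards [eventually_ne_cobounded (0 : 𝕜)] with z hz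
  rw [← mul_div_mul_left _ _ hz, mul_sub, mul_sub, mul_inv_cancel₀ hz, mul_comm z c, mul_comm z d]

section Lattice

variable {𝕜 : Type*} [NormedField 𝕜] {q : 𝕜}

theorem tendsto_mul_zpow_atTop_nhds_zero (hq1 : ‖q‖ < 1) (y : 𝕜) :
    Tendsto (fun m : ℤ => y * q ^ m) atTop (𝓝 0) := by
  rw [← Nat.map_cast_int_atTop, tendsto_map'_iff]
  simpa [Function.comp_def] using (tendsto_pow_atTop_nhds_zero_of_norm_lt_one hq1).const_mul y

theorem tendsto_mul_zpow_atBot_cobounded (hq0 : q ≠ 0) (hq1 : ‖q‖ < 1) {y : 𝕜} (hy : y ≠ 0) :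
    Tendsto (fun m : ℤ => y * q ^ m) atBot (cobounded 𝕜) := by
  have hinv : Tendsto (fun m : ℤ => y⁻¹ * q ^ m) atTop (𝓝[≠] 0) :=
    tendsto_nhdsWithin_iff.2 ⟨tendsto_mul_zpow_atTop_nhds_zero hq1 y⁻¹,
      .of_forall fun m => mul_ne_zero (inv_ne_zero hy) (zpow_ne_zero m hq0)⟩
  refine ((tendsto_inv₀_nhdsNE_zero.comp hinv).comp tendsto_neg_atBot_atTop).congr fun m => ?_
  simp [mul_comm]

theorem mul_zpow_injective (hq0 : q ≠ 0) (hq1 : ‖q‖ < 1) {y : 𝕜} (hy : y ≠ 0) :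
    Function.Injective fun m : ℤ => y * q ^ m := fun m l h =>
  zpow_right_injective₀ (norm_pos_iff.2 hq0) hq1.ne
    (by simpa only [norm_zpow] using congr_arg norm (mul_left_cancel₀ hy h))

end Lattice

section JacksonSum

variable {𝕜 : Type*} [NormedField 𝕜] {q t y : 𝕜}

/-- Summand of the one-variable Jackson integral of `f` along the lattice `y q^ℤ`, with the power
`z^α` normalized to be `t ^ m` at `z = y * q ^ m`, where `t` stands for `q^α`. -/
def jacksonTerm (q t y : 𝕜) (f : 𝕜 → 𝕜) (m : ℤ) : 𝕜 := t ^ m * f (y * q ^ m)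

/-- The one-variable Jackson integral of `f` along the lattice `y q^ℤ`, without its customary
factor `1 - q`. -/
noncomputable def jacksonSum (q t y : 𝕜) (f : 𝕜 → 𝕜) : 𝕜 := ∑' m, jacksonTerm q t y f m

theorem jacksonSum_eq_mul_jacksonSum_comp_mul_right (hq0 : q ≠ 0) (ht0 : t ≠ 0) (f : 𝕜 → 𝕜) :
    jacksonSum q t y f = t * jacksonSum q t y fun z => f (z * q) := by
  rw [jacksonSum, ← (Equiv.addRight (1 : ℤ)).tsum_eq, jacksonSum, ← tsum_mul_left]
  refine tsum_congr fun m => ?_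
  simp only [jacksonTerm, Equiv.coe_addRight, zpow_add_one₀ hq0, zpow_add_one₀ ht0, mul_assoc,
    mul_left_comm t]

theorem mul_jacksonTerm_mul_left (f : 𝕜 → 𝕜) (m : ℤ) :
    y * jacksonTerm q (q * t) y f m = jacksonTerm q t y (fun z => f z * z) m := by
  rw [jacksonTerm, jacksonTerm, mul_zpow]
  ring

theorem summable_jacksonTerm [CompleteSpace 𝕜] (hq0 : q ≠ 0) (hq1 : ‖q‖ < 1) (hy : y ≠ 0)
    {f ρ : 𝕜 → 𝕜} {α β : 𝕜} (hf : ∀ᶠ z in cofinite, f (z * q) = ρ z * f z)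
    (hα : Tendsto ρ (𝓝 0) (𝓝 α)) (hα1 : ‖t * α‖ < 1)
    (hβ : Tendsto ρ (cobounded 𝕜) (𝓝 β)) (hβ1 : 1 < ‖t * β‖) :
    Summable (jacksonTerm q t y f) := by
  have ht0 : t ≠ 0 := by
    rintro rfl
    simp [zero_le_one.not_gt] at hβ1
  refine summable_int_of_tendsto_ratio (ρ := fun m => t * ρ (y * q ^ m)) ?_
    ((hα.comp (tendsto_mul_zpow_atTop_nhds_zero hq1 y)).const_mul t) hα1
    ((hβ.comp (tendsto_mul_zpow_atBot_cobounded hq0 hq1 hy)).const_mul t) hβ1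
  filter_upwards [(mul_zpow_injective hq0 hq1 hy).tendsto_cofinite.eventually hf] with m hm
  rw [jacksonTerm, jacksonTerm, zpow_add_one₀ ht0, zpow_add_one₀ hq0, ← mul_assoc y, hm]
  ring

theorem jacksonSum_mul_eval {w : 𝕜 → 𝕜} {N : ℕ}
    (hw : ∀ k ≤ N, Summable (jacksonTerm q t y fun z => w z * z ^ k)) {P : 𝕜[X]}
    (hP : P.natDegree ≤ N) :
    jacksonSum q t y (fun z => w z * P.eval z) =
      ∑ k : Fin (N + 1), P.coeff k * jacksonSum q t y fun z => w z * z ^ (k : ℕ) := by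
  simp only [jacksonSum, ← tsum_mul_left]
  rw [← Summable.tsum_finsetSum fun (k : Fin (N + 1)) _ => (hw k k.is_le).mul_left _]
  refine tsum_congr fun m => ?_
  rw [jacksonTerm, P.eval_eq_sum_range' (Nat.lt_succ_of_le hP),
    ← Fin.sum_univ_eq_sum_range fun k => P.coeff k * (y * q ^ m) ^ k]
  simp only [jacksonTerm, Finset.mul_sum]
  exact Finset.sum_congr rfl fun k _ => by ring

theorem sum_coeff_mul_jacksonSum_eq_zero (hq0 : q ≠ 0) (ht0 : t ≠ 0) {w : 𝕜 → 𝕜} {N : ℕ}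
    (hw : ∀ k ≤ N, Summable (jacksonTerm q t y fun z => w z * z ^ k)) {A B : 𝕜[X]}
    (hA : A.natDegree ≤ N) (hB : B.natDegree ≤ N)
    (pearson : ∀ m : ℤ, w (y * q ^ m * q) * A.eval (y * q ^ m * q) =
      w (y * q ^ m) * B.eval (y * q ^ m)) :
    ∑ k : Fin (N + 1), (A - C t * B).coeff k * jacksonSum q t y (fun z => w z * z ^ (k : ℕ)) =
      0 := by
  have translate : jacksonSum q t y (fun z => w z * A.eval z) =
      t * jacksonSum q t y fun z => w z * B.eval z := by
    rw [jacksonSum_eq_mul_jacksonSum_comp_mul_right hq0 ht0]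
    simp only [jacksonSum, jacksonTerm, pearson]
  simp only [coeff_sub, coeff_C_mul, sub_mul, Finset.sum_sub_distrib, mul_assoc, ← Finset.mul_sum]
  rw [← jacksonSum_mul_eval hw hA, ← jacksonSum_mul_eval hw hB, translate, sub_self]

end JacksonSum

section ProdOneSub

variable {ι R : Type*} [CommRing R]

theorem natDegree_one_sub_C_mul_X_le (c : R) : (1 - C c * X : R[X]).natDegree ≤ 1 := by
  compute_degree

theorem natDegree_prod_one_sub_C_mul_X_le (s : Finset ι) (c : ι → R) :
    (∏ j ∈ s, (1 - C (c j) * X)).natDegree ≤ #s := by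
  simpa using (natDegree_prod_le s _).trans
    (Finset.sum_le_card_nsmul s _ 1 fun j _ => natDegree_one_sub_C_mul_X_le (c j))

theorem coeff_card_prod_one_sub_C_mul_X (s : Finset ι) (c : ι → R) :
    (∏ j ∈ s, (1 - C (c j) * X)).coeff #s = (-1) ^ #s * ∏ j ∈ s, c j := by
  rw [← mul_one #s, coeff_prod_of_natDegree_le _ _ 1 fun j _ => natDegree_one_sub_C_mul_X_le (c j)]
  simp [coeff_one, Finset.prod_neg]

theorem coeff_zero_prod_one_sub_C_mul_X (s : Finset ι) (c : ι → R) :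
    (∏ j ∈ s, (1 - C (c j) * X)).coeff 0 = 1 := by
  simp [coeff_zero_prod]

end ProdOneSub

section RelationPolynomial

variable {𝕜 : Type*} [Field 𝕜] {n : ℕ} {t : 𝕜} {a b : Fin n → 𝕜}

/-- The polynomial whose coefficients are those of the linear relation between the moments of orders
`0, …, n`. -/
noncomputable def mgPoly (t : 𝕜) (a b : Fin n → 𝕜) : 𝕜[X] :=
  ∏ j, (1 - C (a j)⁻¹ * X) - C t * ∏ j, (1 - C (b j) * X)

theorem mgPoly_coeff_zero (t : 𝕜) (a b : Fin n → 𝕜) : (mgPoly t a b).coeff 0 = 1 - t := by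
  rw [mgPoly, coeff_sub, coeff_C_mul, coeff_zero_prod_one_sub_C_mul_X,
    coeff_zero_prod_one_sub_C_mul_X, mul_one]

theorem mgPoly_coeff_self (t : 𝕜) (a b : Fin n → 𝕜) :
    (mgPoly t a b).coeff n = (-1) ^ n * ((∏ j, a j)⁻¹ - t * ∏ j, b j) := by
  have hcoeff (c : Fin n → 𝕜) : (∏ j, (1 - C (c j) * X)).coeff n = (-1) ^ n * ∏ j, c j := by
    simpa using coeff_card_prod_one_sub_C_mul_X univ c
  rw [mgPoly, coeff_sub, coeff_C_mul, hcoeff, hcoeff, Finset.prod_inv_distrib]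
  ring

theorem one_sub_mul_det_of_sum_coeff_mgPoly_mul_eq_zero {S : Fin n → ℕ → 𝕜}
    (hS : ∀ i, ∑ k : Fin (n + 1), (mgPoly t a b).coeff k * S i k = 0) :
    (1 - t) * (Matrix.of fun i j : Fin n => S i j).det =
      ((∏ j, a j)⁻¹ - t * ∏ j, b j) * (Matrix.of fun i j : Fin n => S i (j + 1)).det := by
  let M : Matrix (Fin n) (Fin (n + 1)) 𝕜 := Matrix.of fun i k => S i k
  have hM : M.mulVec (fun k => (mgPoly t a b).coeff k) = 0 :=
    funext fun i => (dotProduct_comm _ _).trans (hS i)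
  have hfirst : M.submatrix id (Fin.last n).succAbove = Matrix.of fun i j : Fin n => S i j := by
    ext i j
    simp [M]
  have hlast : M.submatrix id (0 : Fin (n + 1)).succAbove =
      Matrix.of fun i j : Fin n => S i (j + 1) := by
    ext i j
    simp [M]
  have minors := mul_det_submatrix_succAbove_comm hM 0 (Fin.last n)
  rw [hfirst, hlast, Fin.val_zero, Fin.val_last, mgPoly_coeff_zero, mgPoly_coeff_self] at minors
  refine mul_left_cancel₀ (pow_ne_zero n (neg_ne_zero.2 one_ne_zero)) ?_
  linear_combination minors

end RelationPolynomial

section Weight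

theorem qp_eq_one_sub_mul_qp {q : ℂ} (hq1 : ‖q‖ < 1) (a : ℂ) :
    qp q a = (1 - a) * qp q (q * a) := by
  have hsum : Summable fun i : ℕ => ‖-(q ^ (i + 1) * a)‖ := by
    simpa [pow_succ, mul_assoc] using
      (summable_geometric_of_lt_one (norm_nonneg q) hq1).mul_right (‖q‖ * ‖a‖)
  have hprod : Multipliable fun i : ℕ => 1 - q ^ (i + 1) * a := by
    simpa only [sub_eq_add_neg] using multipliable_one_add_of_summable hsum
  rw [qp, tprod_eq_zero_mul' (f := fun i : ℕ => 1 - q ^ i * a) hprod]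
  simp only [qp, pow_zero, one_mul, pow_succ, mul_assoc]

theorem qp_div_qp_mul_right {q : ℂ} (hq1 : ‖q‖ < 1) (c : ℂ) {b z : ℂ} (hz : 1 - b * z ≠ 0) :
    qp q (c * (z * q)) / qp q (b * (z * q)) * (1 - c * z) =
      qp q (c * z) / qp q (b * z) * (1 - b * z) := by
  rw [qp_eq_one_sub_mul_qp hq1 (c * z), qp_eq_one_sub_mul_qp hq1 (b * z), mul_comm z q,
    mul_left_comm c, mul_left_comm b, div_mul_eq_mul_div, div_mul_eq_mul_div,
    mul_comm _ (1 - b * z), mul_div_mul_left _ _ hz, mul_comm]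

variable {n : ℕ} {q t : ℂ} {a b : Fin n → ℂ}

/-- The one-variable weight whose product over `z = x i * q ^ ν i` is the `q`-Pochhammer factor of
the Milne–Gustafson summand. -/
noncomputable def mgWeight (q : ℂ) (a b : Fin n → ℂ) (z : ℂ) : ℂ :=
  ∏ j, qp q (q * (a j)⁻¹ * z) / qp q (b j * z)

theorem mgWeight_mul_right_mul_prod (hq1 : ‖q‖ < 1) (a : Fin n → ℂ) {z : ℂ}
    (hz : ∀ j, 1 - b j * z ≠ 0) :
    mgWeight q a b (z * q) * ∏ j, (1 - q * (a j)⁻¹ * z) =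
      mgWeight q a b z * ∏ j, (1 - b j * z) := by
  simp only [mgWeight, ← Finset.prod_mul_distrib]
  exact Finset.prod_congr rfl fun j _ => qp_div_qp_mul_right hq1 _ (hz j)

theorem eventually_cofinite_mgWeight_mul_right (hq1 : ‖q‖ < 1) (a b : Fin n → ℂ) :
    ∀ᶠ z in cofinite, mgWeight q a b (z * q) =
      (∏ j, (1 - b j * z) / (1 - q * (a j)⁻¹ * z)) * mgWeight q a b z := by
  filter_upwards [eventually_all.2 fun j => eventually_cofinite_one_sub_mul_ne_zero (b j),
    eventually_all.2 fun j => eventually_cofinite_one_sub_mul_ne_zero (q * (a j)⁻¹)] with z hb ha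
  rw [Finset.prod_div_distrib, div_mul_eq_mul_div, mul_comm _ (mgWeight q a b z),
    eq_div_iff (Finset.prod_ne_zero_iff.2 fun j _ => ha j), mgWeight_mul_right_mul_prod hq1 a hb]

theorem summable_jacksonTerm_mgWeight_mul_pow (hq0 : q ≠ 0) (hq1 : ‖q‖ < 1) {y : ℂ} (hy : y ≠ 0)
    (hlow : 1 < ‖t * (∏ i, a i) * ∏ i, b i‖) (hupp : ‖t‖ < 1) {k : ℕ} (hk : k ≤ n) :
    Summable (jacksonTerm q t y fun z => mgWeight q a b z * z ^ k) := by
  have ha : ∀ j, a j ≠ 0 := by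
    have := norm_pos_iff.1 (zero_lt_one.trans hlow)
    simpa [Finset.prod_ne_zero_iff] using right_ne_zero_of_mul (left_ne_zero_of_mul this)
  let ρ : ℂ → ℂ := fun z => q ^ k * ∏ j, (1 - b j * z) / (1 - q * (a j)⁻¹ * z)
  have hρ_zero : Tendsto ρ (𝓝 0) (𝓝 (q ^ k)) := by
    have hcont : ContinuousAt ρ 0 := by fun_prop (disch := simp)
    simpa [ContinuousAt, ρ] using hcont
  have hρ_cobounded : Tendsto ρ (cobounded ℂ) (𝓝 (q ^ k * ∏ j, b j / (q * (a j)⁻¹))) :=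
    (tendsto_finsetProd _ fun j _ => tendsto_one_sub_mul_div_one_sub_mul_cobounded (b j)
      (mul_ne_zero hq0 (inv_ne_zero (ha j)))).const_mul _
  refine summable_jacksonTerm hq0 hq1 hy ?_ hρ_zero ?_ hρ_cobounded ?_
  · filter_upwards [eventually_cofinite_mgWeight_mul_right hq1 a b] with z hz
    rw [hz, mul_pow]
    ring
  · rw [norm_mul, norm_pow]
    exact (mul_le_of_le_one_right (norm_nonneg t) (pow_le_one₀ (norm_nonneg q) hq1.le)).trans_lt
      hupp
  · have hlim : t * (q ^ k * ∏ j, b j / (q * (a j)⁻¹)) =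
        t * (∏ i, a i) * (∏ i, b i) / q ^ (n - k) := by
      rw [pow_sub₀ q hq0 hk]
      simp only [Finset.prod_div_distrib, Finset.prod_mul_distrib, Finset.prod_const,
        Finset.card_univ, Fintype.card_fin, Finset.prod_inv_distrib]
      field_simp
    rw [hlim, norm_div, norm_pow]
    exact hlow.trans_le (le_div_self (norm_nonneg _) (pow_pos (norm_pos_iff.2 hq0) _)
      (pow_le_one₀ (norm_nonneg q) hq1.le))

end Weight

section Determinants

variable {n : ℕ} {q t : ℂ} {a b x : Fin n → ℂ}

/-- The moment of order `k` of the weight `mgWeight q a b` along the lattice `y q^ℤ`. -/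
noncomputable def mgMoment (q t : ℂ) (a b : Fin n → ℂ) (y : ℂ) (k : ℕ) : ℂ :=
  jacksonSum q t y fun z => mgWeight q a b z * z ^ k

theorem mgTerm_eq_det (ht0 : t ≠ 0) (a b x : Fin n → ℂ) (ν : Fin n → ℤ) :
    mgTerm q t a b x ν =
      (Matrix.of fun i j : Fin n =>
        jacksonTerm q t (x i) (fun z => mgWeight q a b z * z ^ (j : ℕ)) (ν i)).det := by
  have hdet := Matrix.det_mul_column (fun i => t ^ ν i * mgWeight q a b (x i * q ^ ν i))
    (Matrix.vandermonde fun i => x i * q ^ ν i)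
  rw [Matrix.det_vandermonde, Finset.prod_mul_distrib, ← zpow_sum₀ ht0] at hdet
  simp only [jacksonTerm, ← mul_assoc]
  exact hdet.symm

theorem prod_mul_mgTerm_mul_left (hq0 : q ≠ 0) (ht0 : t ≠ 0) (a b x : Fin n → ℂ)
    (ν : Fin n → ℤ) :
    (∏ i, x i) * mgTerm q (q * t) a b x ν =
      (Matrix.of fun i j : Fin n =>
        jacksonTerm q t (x i) (fun z => mgWeight q a b z * z ^ (j + 1 : ℕ)) (ν i)).det := by
  simp only [mgTerm_eq_det (mul_ne_zero hq0 ht0), ← Matrix.det_mul_column, Matrix.of_apply,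
    mul_jacksonTerm_mul_left, mul_assoc, ← pow_succ]

theorem mgSum_eq_det (ht0 : t ≠ 0)
    (hsum : ∀ i, ∀ k < n, Summable (jacksonTerm q t (x i) fun z => mgWeight q a b z * z ^ k)) :
    mgSum q t a b x =
      (1 - q) ^ n * (Matrix.of fun i j : Fin n => mgMoment q t a b (x i) j).det := by
  simp only [mgSum, mgTerm_eq_det ht0]
  rw [(hasSum_det_pi fun i j => (hsum i j j.is_lt).norm).tsum_eq]
  rfl

theorem prod_mul_mgSum_mul_left (hq0 : q ≠ 0) (ht0 : t ≠ 0)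
    (hsum : ∀ i, ∀ k ≤ n, Summable (jacksonTerm q t (x i) fun z => mgWeight q a b z * z ^ k)) :
    (∏ i, x i) * mgSum q (q * t) a b x =
      (1 - q) ^ n * (Matrix.of fun i j : Fin n => mgMoment q t a b (x i) (j + 1)).det := by
  rw [mgSum, mul_left_comm, ← tsum_mul_left]
  simp only [prod_mul_mgTerm_mul_left hq0 ht0]
  rw [(hasSum_det_pi fun i (j : Fin n) => (hsum i (j + 1) j.is_lt).norm).tsum_eq]
  rfl

theorem sum_coeff_mgPoly_mul_mgMoment_eq_zero (hq0 : q ≠ 0) (hq1 : ‖q‖ < 1) (ht0 : t ≠ 0) {y : ℂ}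
    (hsum : ∀ k ≤ n, Summable (jacksonTerm q t y fun z => mgWeight q a b z * z ^ k))
    (hy : ∀ j (m : ℤ), 1 - b j * (y * q ^ m) ≠ 0) :
    ∑ k : Fin (n + 1), (mgPoly t a b).coeff k * mgMoment q t a b y k = 0 := by
  refine sum_coeff_mul_jacksonSum_eq_zero hq0 ht0 hsum
    (by simpa using natDegree_prod_one_sub_C_mul_X_le univ fun j => (a j)⁻¹)
    (by simpa using natDegree_prod_one_sub_C_mul_X_le univ b) fun m => ?_
  have pearson := mgWeight_mul_right_mul_prod hq1 a fun j => hy j m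
  simp only [eval_prod, eval_sub, eval_one, eval_mul, eval_C, eval_X]
  simpa only [mul_comm q, mul_assoc, mul_left_comm q] using pearson

end Determinants

theorem milne_gustafson_recurrence_general {n : ℕ} {q t : ℂ} {a b x : Fin n → ℂ}
    (hq0 : q ≠ 0) (hq1 : ‖q‖ < 1) (hx : ∀ i, x i ≠ 0)
    (hlow : 1 < ‖t * (∏ i, a i) * ∏ i, b i‖) (hupp : ‖t‖ < 1)
    (hxb : ∀ i j, ∀ m : ℤ, x i * b j ≠ q ^ m) :
    mgSum q t a b x =
      (1 - t * (∏ i, a i) * ∏ i, b i) / ((∏ i, a i) * (1 - t)) *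
        (∏ i, x i) * mgSum q (q * t) a b x := by
  obtain ⟨⟨ht0, hA⟩, -⟩ : (t ≠ 0 ∧ ∏ i, a i ≠ 0) ∧ ∏ i, b i ≠ 0 := by
    simpa only [mul_ne_zero_iff] using norm_pos_iff.1 (zero_lt_one.trans hlow)
  have ht1 : 1 - t ≠ 0 := by
    intro h
    simp [← sub_eq_zero.1 h] at hupp
  have hy : ∀ i j (m : ℤ), 1 - b j * (x i * q ^ m) ≠ 0 := fun i j m h =>
    hxb i j (-m) <| by
      rw [zpow_neg]
      exact eq_inv_of_mul_eq_one_left (by linear_combination -h)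
  have hsum i k (hk : k ≤ n) :
      Summable (jacksonTerm q t (x i) fun z => mgWeight q a b z * z ^ k) :=
    summable_jacksonTerm_mgWeight_mul_pow hq0 hq1 (hx i) hlow hupp hk
  have hdet := one_sub_mul_det_of_sum_coeff_mgPoly_mul_eq_zero fun i =>
    sum_coeff_mgPoly_mul_mgMoment_eq_zero hq0 hq1 ht0 (hsum i) (hy i)
  rw [mul_assoc, prod_mul_mgSum_mul_left hq0 ht0 hsum,
    mgSum_eq_det ht0 fun i k hk => hsum i k hk.le, div_mul_eq_mul_div,
    eq_div_iff (mul_ne_zero hA ht1)]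
  linear_combination (∏ i, a i) * (1 - q) ^ n * hdet + (1 - q) ^ n *
    (Matrix.of fun i j : Fin n => mgMoment q t a b (x i) (j + 1)).det * mul_inv_cancel₀ hA

/-- Recurrence in the exponent parameter for the Milne–Gustafson sum. -/
theorem milne_gustafson_recurrence
    (q : ℝ) (hq0 : 0 < q) (hq1 : q < 1) (n : ℕ) (hn : 1 ≤ n)
    (a b : Fin n → ℂ) (ha : ∀ i, a i ≠ 0) (hb : ∀ i, b i ≠ 0)
    (t : ℂ) (ht0 : t ≠ 0)
    (x : Fin n → ℂ) (hx : ∀ i, x i ≠ 0)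
    (hlow : ‖(∏ i, a i)⁻¹ * (∏ i, b i)⁻¹‖ < ‖t‖) (hupp : ‖t‖ < 1)
    (hxb : ∀ i j, ∀ m : ℤ, x i * b j ≠ (q : ℂ) ^ m) :
    mgSum (q : ℂ) t a b x =
      (1 - t * (∏ i, a i) * ∏ i, b i) / ((∏ i, a i) * (1 - t)) *
        (∏ i, x i) * mgSum (q : ℂ) ((q : ℂ) * t) a b x := by
  have hAB : 0 < ‖(∏ i, a i) * ∏ i, b i‖ := norm_pos_iff.2 <|
    mul_ne_zero (Finset.prod_ne_zero_iff.2 fun i _ => ha i)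
      (Finset.prod_ne_zero_iff.2 fun i _ => hb i)
  rw [← mul_inv, norm_inv, inv_lt_iff_one_lt_mul₀ hAB, ← norm_mul, ← mul_assoc] at hlow
  exact milne_gustafson_recurrence_general (mod_cast hq0.ne')
    (by simpa [abs_of_pos hq0] using hq1) hx hlow hupp hxb
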